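/- arXiv:2306.12445 — 2 statements merged into one kernel-verified Lean document; each statement's English description precedes it below -/
import Mathlib

section
/- Every constant function g : ℝ → ℝ can be written as a composition g = h ∘ f of two Hamel functions h, f : ℝ → ℝ. -/
/-- The graph of a function `f : ℝ → ℝ`, as a subset of `ℝ × ℝ`. -/
def graph (f : ℝ → ℝ) : Set (ℝ × ℝ) := Set.range fun x => (x, f x)

/-- `f : ℝ → ℝ` is a Hamel function if its graph is a basis of `ℝ × ℝ`
as a vector space over `ℚ`, i.e. the graph is `ℚ`-linearly independent and
spans `ℝ × ℝ` over `ℚ`. -/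
def IsHamelFunction (f : ℝ → ℝ) : Prop :=
  LinearIndependent ℚ ((↑) : graph f → ℝ × ℝ) ∧
    Submodule.span ℚ (graph f) = ⊤

/-!
Let `B` be a Hamel basis of `ℝ`. Since a sum of two elements of `B` lies outside `B`, the
Schröder-Bernstein theorem gives a bijection `e : Bᶜ ≃ B`. The vectors `(x, 0)` for `x ∈ B` and
`(0, e x)` for `x ∉ B` form a basis of `ℝ × ℝ` indexed by `ℝ`. Let `ψ` be the linear map with
`ψ (e x) = x` and, given `w`, let `φ` be the linear map equal to `w` on `B`.

* Applying `(x, y) ↦ (x + ψ y, y)` and then `(x, y) ↦ (x, y + φ x)` turns this basis into the graph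
  of a Hamel function `h` equal to `w` on `B`.
* In the opposite order, with `w = e 0`, they turn it into the graph of a Hamel function `f` with
  values in `B`: it is `e` off `B`, and it is `e 0` on `B` because `ψ (e 0) = 0`.

Hence `h ∘ f` is the constant `w`.
-/

section HamelMap

open Module Set

variable {R V W ι κ : Type*} [Ring R] [AddCommGroup V] [Module R V] [AddCommGroup W] [Module R W]

/-- Hamel functions over an arbitrary ring of scalars: the points `(x, f x)`, as a family indexed by
the domain of `f`, form a basis of the product module. -/
def IsHamelMap (R : Type*) {V W : Type*} [Ring R] [AddCommGroup V] [Module R V] [AddCommGroup W]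
    [Module R W] (f : V → W) : Prop :=
  LinearIndependent R (fun x => (x, f x)) ∧ Submodule.span R (range fun x => (x, f x)) = ⊤

theorem IsHamelMap.isHamelFunction {f : ℝ → ℝ} (hf : IsHamelMap ℚ f) : IsHamelFunction f :=
  ⟨hf.1.linearIndepOn_id, hf.2⟩

theorem isHamelMap_snd_of_basis (a : Basis V R (V × W)) (ha : ∀ x, (a x).1 = x) :
    IsHamelMap R fun x => (a x).2 := by
  have graph_eq : (fun x => (x, (a x).2)) = a := funext fun x => Prod.ext (ha x).symm rfl
  rw [IsHamelMap, graph_eq]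
  exact ⟨a.linearIndependent, a.span_eq⟩

/-- The automorphism `(x, y) ↦ (x, y + φ x)` of `V × W`. -/
def shearSnd (φ : V →ₗ[R] W) : (V × W) ≃ₗ[R] V × W :=
  (LinearEquiv.refl R V).skewProd (LinearEquiv.refl R W) φ

@[simp]
theorem shearSnd_apply (φ : V →ₗ[R] W) (p : V × W) : shearSnd φ p = (p.1, p.2 + φ p.1) :=
  rfl

/-- The automorphism `(x, y) ↦ (x + ψ y, y)` of `V × W`. -/
def shearFst (ψ : W →ₗ[R] V) : (V × W) ≃ₗ[R] V × W :=
  LinearEquiv.prodComm R V W ≪≫ₗ shearSnd ψ ≪≫ₗ LinearEquiv.prodComm R W V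

@[simp]
theorem shearFst_apply (ψ : W →ₗ[R] V) (p : V × W) : shearFst ψ p = (p.1 + ψ p.2, p.2) :=
  rfl

/-- The linear map that sends the basis vector `c (e x)` to `x`, for every `x` in `s`. -/
noncomputable def symmLift {s : Set V} (c : Basis κ R W) (e : s ≃ κ) : W →ₗ[R] V :=
  c.constr ℕ fun k => (e.symm k : V)

@[simp]
theorem symmLift_basis {s : Set V} (c : Basis κ R W) (e : s ≃ κ) (x : s) :
    symmLift c e (c (e x)) = x := by
  simp [symmLift, Basis.constr_basis]

section Nontrivial

variable [Nontrivial R]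

theorem zero_mem_compl_range_basis (b : Basis ι R V) : 0 ∈ (range b)ᶜ := by
  rintro ⟨i, hi⟩
  exact b.ne_zero i hi

theorem add_mem_compl_range_basis (b : Basis ι R V) (i j : ι) : b i + b j ∈ (range b)ᶜ := by
  rintro ⟨k, hk⟩
  have coord_sum : (1 : R) = 1 + 1 := by
    simpa only [map_add, Basis.constr_basis] using congrArg (b.constr ℕ fun _ => (1 : R)) hk
  simp at coord_sum

theorem nonempty_compl_range_basis_equiv (b : Basis ι R V) (e : V ≃ ι) :
    Nonempty (↥(range b)ᶜ ≃ ι) := by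
  have translate_injective :
      Function.Injective fun i =>
        (⟨b i + b (e 0), add_mem_compl_range_basis b i (e 0)⟩ : ↥(range b)ᶜ) :=
    fun i j hij => b.injective (add_right_cancel (congrArg Subtype.val hij))
  exact Function.Embedding.antisymm ((Function.Embedding.subtype _).trans e.toEmbedding)
    ⟨_, translate_injective⟩

open Classical in
/-- The basis of `V × W` indexed by `V` that consists of `(x, 0)` for `x` in the basis `b` and of
`(0, c (e x))` for `x` outside it. -/
noncomputable def splitBasis (b : Basis ι R V) (c : Basis κ R W) (e : ↥(range b)ᶜ ≃ κ) :
    Basis V R (V × W) :=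
  (b.prod c).reindex
    (((Equiv.ofInjective b b.injective).sumCongr e.symm).trans (Equiv.Set.sumCompl (range b)))

@[simp]
theorem splitBasis_basis (b : Basis ι R V) (c : Basis κ R W) (e : ↥(range b)ᶜ ≃ κ) (i : ι) :
    splitBasis b c e (b i) = (b i, 0) := by
  classical
  simp [splitBasis, Equiv.Set.sumCompl_symm_apply_of_mem (mem_range_self i)]

@[simp]
theorem splitBasis_compl (b : Basis ι R V) (c : Basis κ R W) (e : ↥(range b)ᶜ ≃ κ)
    (x : ↥(range b)ᶜ) : splitBasis b c e x = (0, c (e x)) := by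
  classical
  simp [splitBasis]

theorem exists_isHamelMap_eq_on_basis (b : Basis ι R V) (c : Basis κ R W)
    (e : ↥(range b)ᶜ ≃ κ) (w : W) :
    ∃ h : V → W, IsHamelMap R h ∧ ∀ i, h (b i) = w := by
  let φ : V →ₗ[R] W := b.constr ℕ fun _ => w
  have hφ (i : ι) : φ (b i) = w := b.constr_basis ℕ _ i
  let a := (splitBasis b c e).map (shearFst (symmLift c e) ≪≫ₗ shearSnd φ)
  have fst_a (x : V) : (a x).1 = x := by
    by_cases hx : x ∈ range b
    · obtain ⟨i, rfl⟩ := hx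
      simp [a]
    · lift x to ↥(range b)ᶜ using hx
      simp [a]
  exact ⟨_, isHamelMap_snd_of_basis a fst_a, fun i => by simp [a, hφ]⟩

theorem exists_isHamelMap_mem_range_basis (b : Basis ι R V) (c : Basis κ R W)
    (e : ↥(range b)ᶜ ≃ κ) :
    ∃ f : V → W, IsHamelMap R f ∧ ∀ x, f x ∈ range c := by
  let zero : ↥(range b)ᶜ := ⟨0, zero_mem_compl_range_basis b⟩
  let φ : V →ₗ[R] W := b.constr ℕ fun _ => c (e zero)
  have hφ (i : ι) : φ (b i) = c (e zero) := b.constr_basis ℕ _ i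
  let a := (splitBasis b c e).map (shearSnd φ ≪≫ₗ shearFst (symmLift c e))
  have a_basis (i : ι) : a (b i) = (b i, c (e zero)) := by simp [a, hφ, zero]
  have a_compl (x : ↥(range b)ᶜ) : a x = (↑x, c (e x)) := by simp [a]
  have a_spec (x : V) : (a x).1 = x ∧ (a x).2 ∈ range c := by
    by_cases hx : x ∈ range b
    · obtain ⟨i, rfl⟩ := hx
      simp [a_basis]
    · lift x to ↥(range b)ᶜ using hx
      simp [a_compl]
  exact ⟨_, isHamelMap_snd_of_basis a fun x => (a_spec x).1, fun x => (a_spec x).2⟩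

end Nontrivial

theorem stmt_2_general [StrongRankCondition R] [Module.Free R V]
    (hV : Module.rank R V = Cardinal.mk V) (w : V) :
    ∃ h f : V → V, IsHamelMap R h ∧ IsHamelMap R f ∧ Function.const V w = h ∘ f := by
  have : Nontrivial R := nontrivial_of_invariantBasisNumber R
  let b := Free.chooseBasis R V
  have ⟨eV⟩ : Nonempty (V ≃ Free.ChooseBasisIndex R V) :=
    Cardinal.eq.1 (hV.symm.trans (Free.rank_eq_card_chooseBasisIndex R V))
  obtain ⟨e⟩ := nonempty_compl_range_basis_equiv b eV
  obtain ⟨h, hh, h_basis⟩ := exists_isHamelMap_eq_on_basis b b e w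
  obtain ⟨f, hf, f_mem⟩ := exists_isHamelMap_mem_range_basis b b e
  refine ⟨h, f, hh, hf, funext fun x => ?_⟩
  obtain ⟨i, hi⟩ := f_mem x
  rw [Function.const_apply, Function.comp_apply, ← hi, h_basis]

end HamelMap

theorem stmt_2 (g : ℝ → ℝ) (c : ℝ) (hg : ∀ x, g x = c) :
    ∃ h f : ℝ → ℝ, IsHamelFunction h ∧ IsHamelFunction f ∧ g = h ∘ f := by
  obtain ⟨h, f, hh, hf, const_eq⟩ :=
    stmt_2_general (Real.rank_rat_real.trans Cardinal.mk_real.symm) c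
  exact ⟨h, f, hh.isHamelFunction, hf.isHamelFunction, (funext hg).trans const_eq⟩
end

section
/- There exists a bijection f : ℝ → ℝ which is a Hamel function, i.e., whose graph is a basis of ℝ² as a vector space over ℚ. -/
/-!
A set `G ⊆ ℝ × ℝ` is the graph of a bijective Hamel function when it is a basis of `ℝ × ℝ` that both
coordinate projections map bijectively onto `ℝ`. Such a set is built by transfinite recursion of
length `𝔠`, keeping it linearly independent and both projections injective. At each stage fewer
than `𝔠` points have been chosen, so they span a space of dimension less than `𝔠` and there are
vectors of `ℝ` outside the span of their first (or second) coordinates. With such a vector as the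
free coordinate, any `x` can be made a first coordinate and any `y` a second one; with two of them
as the coordinates of `p`, adding `p` and `p - v` puts `v` into the span. The same works for `V × V`
over any division ring whenever `dim V = |V|`.
-/

open Cardinal Set Submodule

universe u

section TransfiniteConstruction

variable {α ι : Type u}

theorem mk_iUnion_lt_of_finite {κ : Cardinal.{u}} (hκ : ℵ₀ ≤ κ) (hι : #ι < κ) {F : ι → Set α}
    (hF : ∀ i, (F i).Finite) : #(⋃ i, F i) < κ := by
  obtain hfin | hinf := finite_or_infinite ι
  · exact (finite_iUnion hF).lt_aleph0.trans_le hκ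
  · calc #(⋃ i, F i)
      _ ≤ #ι * ⨆ i, #(F i) := mk_iUnion_le F
      _ ≤ #ι * ℵ₀ := mul_le_mul_right (ciSup_le' fun i ↦ (hF i).lt_aleph0.le) _
      _ = #ι := mul_aleph0_eq (aleph0_le_mk ι)
      _ < κ := hι

theorem exists_eq_apply_iUnion_Iio [Preorder ι] [WellFoundedLT ι] (E : Set α → ι → Set α) :
    ∃ F : ι → Set α, ∀ i, F i = E (⋃ j : Iio i, F j) i :=
  ⟨wellFounded_lt.fix fun i F ↦ E (⋃ j : Iio i, F j j.2) i,
    fun i ↦ wellFounded_lt.fix_eq _ i⟩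

theorem accumulate_eq_iUnion_Iio_union [PartialOrder ι] (F : ι → Set α) (i : ι) :
    accumulate F i = (⋃ j : Iio i, F j) ∪ F i := by
  change ⋃ j ∈ Iic i, F j = _
  rw [← Iio_insert, biUnion_insert, union_comm, biUnion_eq_iUnion]

/-- Well-order `ι` in its initial order type, so that fewer than `#ι` requirements precede any given
one, and meet the requirements in turn; the stage reached before each of them is then a union of
fewer than `#ι` finite sets. Adding only finitely many points at a time is what keeps the stages
small when `#ι` is singular. -/
theorem exists_forall_of_forall_finite_extension [Infinite ι] {P : Set α → Prop}
    {D : ι → Set α → Prop}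
    (hP : ∀ {κ : Type u} {A : κ → Set α}, Directed (· ⊆ ·) A → (∀ k, P (A k)) → P (⋃ k, A k))
    (hD : ∀ i, Monotone (D i))
    (hPD : ∀ G, P G → #G < #ι → ∀ i, ¬ D i G →
      ∃ F : Set α, F.Finite ∧ P (G ∪ F) ∧ D i (G ∪ F)) :
    ∃ G, P G ∧ ∀ i, D i G := by
  obtain ⟨_, _, hord⟩ := exists_ord_eq_type_lt ι
  have total_extension (G : Set α) (i : ι) :
      ∃ F : Set α, F.Finite ∧ (P G → #G < #ι → P (G ∪ F) ∧ D i (G ∪ F)) := by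
    by_cases hG : P G ∧ #G < #ι ∧ ¬ D i G
    · obtain ⟨F, hF, hext⟩ := hPD G hG.1 hG.2.1 i hG.2.2
      exact ⟨F, hF, fun _ _ ↦ hext⟩
    · refine ⟨∅, finite_empty, fun hPG hcard ↦ ?_⟩
      rw [union_empty]
      exact ⟨hPG, by_contra fun hDG ↦ hG ⟨hPG, hcard, hDG⟩⟩
  choose E hE_finite hE using total_extension
  obtain ⟨F, hF⟩ := exists_eq_apply_iUnion_Iio E
  have hF_finite (i : ι) : (F i).Finite := hF i ▸ hE_finite _ i
  have before_small (i : ι) : #(⋃ j : Iio i, F j) < #ι :=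
    mk_iUnion_lt_of_finite (aleph0_le_mk ι) (mk_Iio_lt i hord) fun j ↦ hF_finite j
  have stage (i : ι) (hi : P (⋃ j : Iio i, F j)) : P (accumulate F i) ∧ D i (accumulate F i) := by
    rw [accumulate_eq_iUnion_Iio_union, hF i]
    exact hE _ i hi (before_small i)
  have before (i : ι) : P (⋃ j : Iio i, F j) := by
    induction i using WellFoundedLT.induction with
    | ind i ih =>
      have before_eq : ⋃ j : Iio i, F j = ⋃ j : Iio i, accumulate F j :=
        (iUnion_mono fun _ ↦ subset_accumulate).antisymm <| iUnion_subset fun j ↦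
          iUnion₂_subset fun k hk ↦ subset_iUnion (fun k : Iio i ↦ F k) ⟨k, hk.trans_lt j.2⟩
      rw [before_eq]
      exact hP (monotone_accumulate.comp (Subtype.mono_coe _)).directed_le
        fun j ↦ (stage j (ih j j.2)).1
  exact ⟨⋃ i, accumulate F i,
    hP monotone_accumulate.directed_le fun i ↦ (stage i (before i)).1,
    fun i ↦ hD i (subset_iUnion _ i) (stage i (before i)).2⟩

end TransfiniteConstruction

section GenericVectors

variable {K : Type*} {V W : Type u} [DivisionRing K] [AddCommGroup V] [Module K V]
  [AddCommGroup W] [Module K W]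

theorem infinite_of_rank_eq_mk (hV : Module.rank K V = #V) : Infinite V := by
  by_contra hfin
  rw [not_infinite_iff_finite] at hfin
  let b := Module.Basis.ofVectorSpace K V
  obtain ⟨e⟩ : Nonempty (V ≃ Module.Basis.ofVectorSpaceIndex K V) :=
    Cardinal.eq.1 (b.mk_eq_rank''.trans hV).symm
  obtain ⟨x, hx⟩ := Finite.surjective_of_injective (b.injective.comp e.injective) 0
  exact b.ne_zero (e x) hx

theorem exists_notMem_span_of_mk_lt_rank {s : Set V} (hs : #s < Module.rank K V) :
    ∃ x, x ∉ span K s := by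
  by_contra! h
  have rank_le : Module.rank K V ≤ #s := by
    rw [← rank_top K V, ← eq_top_iff'.2 h]
    exact rank_span_le s
  exact hs.not_ge rank_le

theorem eq_top_of_forall_ne_zero_mem [Infinite V] [Infinite W] {N : Submodule K (V × W)}
    (hN : ∀ v : V × W, v.1 ≠ 0 → v.2 ≠ 0 → v ∈ N) : N = ⊤ := by
  classical
  refine eq_top_iff'.2 fun ⟨x, y⟩ ↦ ?_
  obtain ⟨a, ha⟩ := Infinite.exists_notMem_finset {0, x}
  obtain ⟨b, hb⟩ := Infinite.exists_notMem_finset {0, y}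
  simp only [Finset.mem_insert, Finset.mem_singleton, not_or] at ha hb
  have decomposition : (x, y) = (a, b) + (x - a, y - b) := by simp
  rw [decomposition]
  exact add_mem (hN _ ha.1 hb.1)
    (hN _ (sub_ne_zero.2 (Ne.symm ha.2)) (sub_ne_zero.2 (Ne.symm hb.2)))

theorem map_sub_notMem_image_insert (f : V →ₗ[K] W) {s : Set V} {p v : V} (hv : f v ≠ 0)
    (hp : f p ∉ span K (f '' insert v s)) : f (p - v) ∉ f '' insert p s := by
  have image_le {q : V} (hq : q ∈ insert v s) : f q ∈ span K (f '' insert v s) :=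
    subset_span (mem_image_of_mem f hq)
  rintro ⟨q, rfl | hq, hqp⟩
  · exact hv (sub_eq_self.1 ((map_sub f q v).symm.trans hqp.symm))
  · have hfp : f p = f q + f v := by rw [hqp, map_sub, sub_add_cancel]
    exact hp (hfp ▸ add_mem (image_le (mem_insert_of_mem v hq)) (image_le (mem_insert v s)))

end GenericVectors

section PartialHamel

variable (K : Type*) {V : Type u} [DivisionRing K] [AddCommGroup V] [Module K V]

/-- A partial Hamel bijection: the graph of an injective partial function `V → V` which is linearly
independent in `V × V`. These are the approximations to a bijective Hamel function. -/
structure IsPartialHamel (G : Set (V × V)) : Prop where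
  linearIndepOn : LinearIndepOn K id G
  injOn_fst : InjOn Prod.fst G
  injOn_snd : InjOn Prod.snd G

variable {K}

namespace IsPartialHamel

variable {G : Set (V × V)}

theorem iUnion {κ : Type*} {A : κ → Set (V × V)} (hA : Directed (· ⊆ ·) A)
    (h : ∀ k, IsPartialHamel K (A k)) : IsPartialHamel K (⋃ k, A k) where
  linearIndepOn := linearIndepOn_iUnion_of_directed hA fun k ↦ (h k).linearIndepOn
  injOn_fst := inj_on_iUnion_of_directed hA fun k ↦ (h k).injOn_fst
  injOn_snd := inj_on_iUnion_of_directed hA fun k ↦ (h k).injOn_snd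

protected theorem insert (hG : IsPartialHamel K G) {p : V × V} (hp : p ∉ span K G)
    (hp_fst : p.1 ∉ Prod.fst '' G) (hp_snd : p.2 ∉ Prod.snd '' G) :
    IsPartialHamel K (insert p G) where
  linearIndepOn := hG.linearIndepOn.id_insert hp
  injOn_fst := (injOn_insert (notMem_subset subset_span hp)).2 ⟨hG.injOn_fst, hp_fst⟩
  injOn_snd := (injOn_insert (notMem_subset subset_span hp)).2 ⟨hG.injOn_snd, hp_snd⟩

theorem exists_insert_fst (hG : IsPartialHamel K G) (hcard : #G < Module.rank K V) {x : V}
    (hx : x ∉ Prod.fst '' G) : ∃ y, IsPartialHamel K (insert (x, y) G) := by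
  obtain ⟨y, hy⟩ : ∃ y, y ∉ span K (Prod.snd '' G) :=
    exists_notMem_span_of_mk_lt_rank (mk_image_le.trans_lt hcard)
  exact ⟨y, hG.insert (notMem_span_of_apply_notMem_span_image (LinearMap.snd K V V) hy) hx
    (notMem_subset subset_span hy)⟩

theorem exists_insert_snd (hG : IsPartialHamel K G) (hcard : #G < Module.rank K V) {y : V}
    (hy : y ∉ Prod.snd '' G) : ∃ x, IsPartialHamel K (insert (x, y) G) := by
  obtain ⟨x, hx⟩ : ∃ x, x ∉ span K (Prod.fst '' G) :=
    exists_notMem_span_of_mk_lt_rank (mk_image_le.trans_lt hcard)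
  exact ⟨x, hG.insert (notMem_span_of_apply_notMem_span_image (LinearMap.fst K V V) hx)
    (notMem_subset subset_span hx) hy⟩

/-- Writing `v = p - (p - v)` rather than as a sum makes the two new points differ in both
coordinates in every characteristic, since neither coordinate of `v` vanishes. -/
theorem exists_insert_pair (hG : IsPartialHamel K G) (hcard : #G < Module.rank K V)
    (hrank : ℵ₀ ≤ Module.rank K V) {v : V × V} (hv : v ∉ span K G) (hv_fst : v.1 ≠ 0)
    (hv_snd : v.2 ≠ 0) :
    ∃ p, IsPartialHamel K (insert (p - v) (insert p G)) := by
  have hcard' : #(insert v G : Set (V × V)) < Module.rank K V :=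
    mk_insert_le.trans_lt (add_one_lt_of_lt hrank hcard)
  obtain ⟨x, hx⟩ : ∃ x, x ∉ span K (Prod.fst '' insert v G) :=
    exists_notMem_span_of_mk_lt_rank (mk_image_le.trans_lt hcard')
  obtain ⟨y, hy⟩ : ∃ y, y ∉ span K (Prod.snd '' insert v G) :=
    exists_notMem_span_of_mk_lt_rank (mk_image_le.trans_lt hcard')
  have hp : (x, y) ∉ span K (insert v G) :=
    notMem_span_of_apply_notMem_span_image (LinearMap.fst K V V) hx
  have hGp : IsPartialHamel K (insert (x, y) G) :=
    hG.insert (notMem_subset (span_mono (subset_insert v G)) hp)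
      (notMem_subset ((image_mono (subset_insert v G)).trans subset_span) hx)
      (notMem_subset ((image_mono (subset_insert v G)).trans subset_span) hy)
  have hq : (x, y) - v ∉ span K (insert (x, y) G) := by
    rw [sub_mem_iff_right _ (mem_span_of_mem (mem_insert _ G))]
    exact fun hv_mem ↦ hp (mem_span_insert_exchange hv_mem hv)
  exact ⟨(x, y), hGp.insert hq (map_sub_notMem_image_insert (LinearMap.fst K V V) hv_fst hx)
    (map_sub_notMem_image_insert (LinearMap.snd K V V) hv_snd hy)⟩

theorem exists_perm_basis (hG : IsPartialHamel K G) (hfst : SurjOn Prod.fst G univ)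
    (hsnd : SurjOn Prod.snd G univ) (hspan : span K G = ⊤) :
    ∃ (f : Equiv.Perm V) (b : Module.Basis V K (V × V)), ∀ x, b x = (x, f x) := by
  let toFst : G ≃ V := .ofBijective (G.domRestrict Prod.fst)
    ⟨hG.injOn_fst.injective, surjOn_iff_surjective.1 hfst⟩
  let toSnd : G ≃ V := .ofBijective (G.domRestrict Prod.snd)
    ⟨hG.injOn_snd.injective, surjOn_iff_surjective.1 hsnd⟩
  let b : Module.Basis G K (V × V) := .mk hG.linearIndepOn (by simp [hspan])
  refine ⟨toFst.symm.trans toSnd, b.reindex toFst, fun x ↦ ?_⟩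
  have b_apply : b (toFst.symm x) = (toFst.symm x : V × V) := Module.Basis.mk_apply ..
  rw [Module.Basis.reindex_apply, b_apply]
  exact Prod.ext (toFst.apply_symm_apply x) rfl

end IsPartialHamel

variable (K) in
/-- The requirements met one at a time by the construction of a bijective Hamel function: that a
given vector be a first coordinate, that it be a second coordinate, and that a given pair lie in
the span. The pairs with both coordinates nonzero already span `V × V`, and the others are left out
because `IsPartialHamel.exists_insert_pair` does not apply to them. -/
def MeetsRequirement : V ⊕ V ⊕ V × V → Set (V × V) → Prop
  | .inl x, G => x ∈ Prod.fst '' G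
  | .inr (.inl y), G => y ∈ Prod.snd '' G
  | .inr (.inr v), G => v.1 ≠ 0 → v.2 ≠ 0 → v ∈ span K G

theorem MeetsRequirement.monotone : ∀ i : V ⊕ V ⊕ V × V, Monotone (MeetsRequirement K i)
  | .inl _, _, _, hGH => fun hx ↦ image_mono hGH hx
  | .inr (.inl _), _, _, hGH => fun hy ↦ image_mono hGH hy
  | .inr (.inr _), _, _, hGH => fun hv hv_fst hv_snd ↦ span_mono hGH (hv hv_fst hv_snd)

theorem IsPartialHamel.exists_finite_union_meetsRequirement {G : Set (V × V)}
    (hG : IsPartialHamel K G) (hcard : #G < Module.rank K V) (hrank : ℵ₀ ≤ Module.rank K V)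
    {i : V ⊕ V ⊕ V × V} (hi : ¬ MeetsRequirement K i G) :
    ∃ F : Set (V × V), F.Finite ∧ IsPartialHamel K (G ∪ F) ∧ MeetsRequirement K i (G ∪ F) := by
  obtain x | y | v := i
  · obtain ⟨y, hxy⟩ := hG.exists_insert_fst hcard hi
    rw [← union_singleton] at hxy
    exact ⟨{(x, y)}, finite_singleton _, hxy, (x, y), .inr rfl, rfl⟩
  · obtain ⟨x, hxy⟩ := hG.exists_insert_snd hcard hi
    rw [← union_singleton] at hxy
    exact ⟨{(x, y)}, finite_singleton _, hxy, (x, y), .inr rfl, rfl⟩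
  · obtain ⟨hv_fst, hv_snd, hv⟩ : v.1 ≠ 0 ∧ v.2 ≠ 0 ∧ v ∉ span K G := by
      simpa only [MeetsRequirement, Classical.not_imp] using hi
    obtain ⟨p, hp⟩ := hG.exists_insert_pair hcard hrank hv hv_fst hv_snd
    rw [← union_singleton, ← union_singleton, union_assoc] at hp
    refine ⟨{p} ∪ {p - v}, toFinite _, hp, fun _ _ ↦ ?_⟩
    have sub_mem_span : p - (p - v) ∈ span K (G ∪ ({p} ∪ {p - v})) :=
      sub_mem (subset_span (.inr (.inl rfl))) (subset_span (.inr (.inr rfl)))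
    rwa [sub_sub_cancel] at sub_mem_span

theorem exists_isPartialHamel_span_eq_top (hV : Module.rank K V = #V) :
    ∃ G : Set (V × V), IsPartialHamel K G ∧ SurjOn Prod.fst G univ ∧
      SurjOn Prod.snd G univ ∧ span K G = ⊤ := by
  have := infinite_of_rank_eq_mk hV
  have hrank : ℵ₀ ≤ Module.rank K V := hV ▸ aleph0_le_mk V
  have mk_requirements : #(V ⊕ V ⊕ V × V) = Module.rank K V := by simp [hV]
  obtain ⟨G, hG, hmeets⟩ := exists_forall_of_forall_finite_extension IsPartialHamel.iUnion
    MeetsRequirement.monotone fun G hG hcard i hi ↦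
      hG.exists_finite_union_meetsRequirement (mk_requirements ▸ hcard) hrank hi
  exact ⟨G, hG, fun x _ ↦ hmeets (.inl x), fun y _ ↦ hmeets (.inr (.inl y)),
    eq_top_of_forall_ne_zero_mem fun v ↦ hmeets (.inr (.inr v))⟩

end PartialHamel

theorem stmt_6_general (K : Type*) (V : Type*) [DivisionRing K] [AddCommGroup V] [Module K V]
    (hV : Module.rank K V = #V) :
    ∃ (f : Equiv.Perm V) (b : Module.Basis V K (V × V)), ∀ x, b x = (x, f x) := by
  obtain ⟨G, hG, hfst, hsnd, hspan⟩ := exists_isPartialHamel_span_eq_top hV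
  exact hG.exists_perm_basis hfst hsnd hspan

theorem stmt_6 : ∃ f : ℝ → ℝ, Function.Bijective f ∧ IsHamelFunction f := by
  obtain ⟨f, b, hb⟩ := stmt_6_general ℚ ℝ (Real.rank_rat_real.trans mk_real.symm)
  have graph_eq : graph f = range b := congrArg range (funext fun x ↦ (hb x).symm)
  exact ⟨f, f.bijective, graph_eq ▸ b.linearIndependent.linearIndepOn_id, graph_eq ▸ b.span_eq⟩
end
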